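/- arXiv:2403.04057 — 9 statements merged into one kernel-verified Lean document; each statement's English description precedes it below -/
import Mathlib

section
/- Let (s_t)_{t≥1} be a sequence of nonnegative real numbers and let a, c, d be real numbers with 0 < a ≤ 1/2, c ≥ 0 and d ≥ 0. If s_{t+1} ≤ (1 − 2a)·s_t + 2c·√(s_t) + d for every t ≥ 1, then for every t ≥ 1 one has s_t ≤ s_1·(1 − a)^{t−1} + d/a + c²/a². -/
/-!
By completing the square, `2c√x ≤ a x + c²/a`, so the recursion becomes the linear contraction
`s (t+1) ≤ (1 - a) s t + (d + c²/a)`. The affine map on the right has fixed point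
`d/a + c²/a²`, and the excess of `s` over it decays by a factor `1 - a` per step.
-/

/-- Perturbed contraction estimate: if a nonnegative sequence satisfies
`s (t+1) ≤ (1 - 2a) * s t + 2c * √(s t) + d` for all `t ≥ 1`, with
`0 < a ≤ 1/2`, `c ≥ 0`, `d ≥ 0`, then
`s t ≤ s 1 * (1 - a)^(t-1) + d / a + c² / a²` for all `t ≥ 1`. -/
theorem stmt_1 (s : ℕ → ℝ) (a c d : ℝ)
    (ha0 : 0 < a) (ha1 : a ≤ 1 / 2) (hc : 0 ≤ c) (hd : 0 ≤ d)
    (hs : ∀ t, 1 ≤ t → 0 ≤ s t)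
    (hrec : ∀ t, 1 ≤ t → s (t + 1) ≤ (1 - 2 * a) * s t + 2 * c * Real.sqrt (s t) + d) :
    ∀ t, 1 ≤ t → s t ≤ s 1 * (1 - a) ^ (t - 1) + d / a + c ^ 2 / a ^ 2 := by
  -- Completing the square absorbs the square-root term into half of the contraction.
  have hsq : ∀ x : ℝ, 0 ≤ x → 2 * c * Real.sqrt x ≤ a * x + c ^ 2 / a := by
    intro x hx
    have hid : a * x + c ^ 2 / a - 2 * c * Real.sqrt x = (a * Real.sqrt x - c) ^ 2 / a := by
      have hx2 := Real.sq_sqrt hx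
      field_simp
      linear_combination (-a ^ 2) * hx2
    have hnn : 0 ≤ (a * Real.sqrt x - c) ^ 2 / a := by positivity
    linarith
  have main : ∀ k : ℕ, s (k + 1) ≤ s 1 * (1 - a) ^ k + d / a + c ^ 2 / a ^ 2 := by
    intro k
    induction k with
    | zero =>
      have hb : 0 ≤ d / a + c ^ 2 / a ^ 2 := by positivity
      simp only [zero_add, pow_zero, mul_one]
      linarith
    | succ k ih =>
      have h1 := hrec (k + 1) (by omega)
      have h2 := hsq _ (hs (k + 1) (by omega))
      have h3 := mul_le_mul_of_nonneg_left ih (by linarith : 0 ≤ 1 - a)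
      -- `d / a + c ^ 2 / a ^ 2` is the fixed point of `x ↦ (1 - a) * x + (d + c ^ 2 / a)`.
      have h4 : (1 - a) * (s 1 * (1 - a) ^ k + d / a + c ^ 2 / a ^ 2) + c ^ 2 / a + d
          = s 1 * (1 - a) ^ (k + 1) + d / a + c ^ 2 / a ^ 2 := by
        field_simp
        ring
      linarith
  intro t ht
  obtain ⟨k, rfl⟩ := Nat.exists_eq_add_of_le' ht
  simpa using main k
end

section
/- Let T ≥ 1, let N, γ be natural numbers with 0 < γ < N, let ρ ≥ 0, and for t = 1, …, T let b_t ≥ 0 and d_t^γ ≥ d_t^{γ+1} ≥ 0 be real numbers. Set x_t = 1 if b_t > d_t^γ and x_t = 0 otherwise, and define the karma gain g_t = (γ/N)·d_t^γ if b_t > d_t^γ, g_t = (γ/N)·b_t if d_t^{γ+1} < b_t ≤ d_t^γ, and g_t = (γ/N)·d_t^{γ+1} if b_t ≤ d_t^{γ+1}. If Σ_{t=1}^T x_t·d_t^γ ≤ ρ·T + Σ_{t=1}^{T−1} g_t, then Σ_{t=1}^T (x_t − γ/N)·d_t^γ ≤ ρ·T. -/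
/-!
In each case of the gain rule the amount multiplied by `γ/N` is at most `dγ t`, so
`g t ≤ γ/N * dγ t`. Summing, and adding the nonnegative term of round `T`, bounds the total gain
by `∑_{t=1}^T γ/N * dγ t`; moving this sum to the left of the budget constraint gives the claim.
-/

/-- Every bid sequence feasible for the exact hindsight problem of the karma auction
yields outcomes feasible for the relaxed hindsight problem: with auction outcomes
`x t = 1{b t > dγ t}` and redistribution gains `g t` given by the price-setting rule,
the budget constraint `∑_{t=1}^T x t · dγ t ≤ ρT + ∑_{t=1}^{T-1} g t` implies
`∑_{t=1}^T (x t - γ/N) · dγ t ≤ ρT`. -/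
theorem stmt_6 (T N γ : ℕ) (hT : 1 ≤ T) (hγ0 : 0 < γ) (hγN : γ < N)
    (ρ : ℝ) (hρ : 0 ≤ ρ)
    (b dγ dγ1 x g : ℕ → ℝ)
    (hb : ∀ t, 1 ≤ t → t ≤ T → 0 ≤ b t)
    (hd1 : ∀ t, 1 ≤ t → t ≤ T → 0 ≤ dγ1 t)
    (hd : ∀ t, 1 ≤ t → t ≤ T → dγ1 t ≤ dγ t)
    (hx : ∀ t, x t = if dγ t < b t then 1 else 0)
    (hg : ∀ t, g t = if dγ t < b t then (γ : ℝ) / N * dγ t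
        else if dγ1 t < b t then (γ : ℝ) / N * b t else (γ : ℝ) / N * dγ1 t)
    (hbudget : ∑ t ∈ Finset.Icc 1 T, x t * dγ t
        ≤ ρ * T + ∑ t ∈ Finset.Icc 1 (T - 1), g t) :
    ∑ t ∈ Finset.Icc 1 T, (x t - (γ : ℝ) / N) * dγ t ≤ ρ * T := by
  have hc : (0 : ℝ) ≤ (γ : ℝ) / N := by positivity
  have hgain : ∀ t ∈ Finset.Icc 1 (T - 1), g t ≤ (γ : ℝ) / N * dγ t := by
    intro t ht
    rw [Finset.mem_Icc] at ht
    rw [hg t]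
    split_ifs with h1 h2
    · exact le_rfl
    · exact mul_le_mul_of_nonneg_left (not_lt.mp h1) hc
    · exact mul_le_mul_of_nonneg_left (hd t ht.1 (by omega)) hc
  -- Adding the round `T` term only increases the bound, since `dγ T ≥ 0`.
  have hsum : ∑ t ∈ Finset.Icc 1 (T - 1), g t
      ≤ ∑ t ∈ Finset.Icc 1 T, (γ : ℝ) / N * dγ t := by
    refine (Finset.sum_le_sum hgain).trans ?_
    refine Finset.sum_le_sum_of_subset_of_nonneg
      (Finset.Icc_subset_Icc_right (Nat.sub_le T 1)) ?_
    intro t ht _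
    rw [Finset.mem_Icc] at ht
    exact mul_nonneg hc ((hd1 t ht.1 ht.2).trans (hd t ht.1 ht.2))
  simp only [sub_mul, Finset.sum_sub_distrib]
  linarith
end

section
/- Let λ > 0, ρ > 0, M > 0 and ε̂ ≥ 0, and let f : [0, M] → ℝ be continuous and satisfy (x − y)·(f(x) − f(y)) ≤ −λ·(x − y)² for all x, y ∈ [0, M]. Assume f(0) > ρ and −ε̂ ≤ f(M) ≤ 0. Then there exists a unique μ* ∈ [0, M] with f(μ*) = ρ; moreover 0 < μ* < M and M − μ* ≤ (ρ + ε̂)/λ. -/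
/-!
Since `f M ≤ 0 < ρ < f 0`, the intermediate value theorem gives `m ∈ (0, M)` with `f m = ρ`.
Strong monotonicity between `M` and `m`, divided by `M - m > 0`, reads
`lam * (M - m) ≤ ρ - f M ≤ ρ + ehat`, which is the distance bound. Between `m` and another
solution `y` it reads `0 ≤ -lam * (y - m) ^ 2`, which forces `y = m`.
-/

/-- Existence, uniqueness and location of the hindsight-optimal dual multiplier:
if `f` is continuous and `λ`-strongly decreasing on `[0, M]`, `f 0 > ρ > 0` and
`-ε̂ ≤ f M ≤ 0`, then there is a unique `μ* ∈ [0, M]` with `f μ* = ρ`; moreover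
`0 < μ* < M` and `M - μ* ≤ (ρ + ε̂)/λ`. -/
theorem stmt_9 (lam ρ M ehat : ℝ) (hlam : 0 < lam) (hρ : 0 < ρ) (hM : 0 < M)
    (hehat : 0 ≤ ehat)
    (f : ℝ → ℝ) (hf : ContinuousOn f (Set.Icc 0 M))
    (hmono : ∀ x ∈ Set.Icc (0 : ℝ) M, ∀ y ∈ Set.Icc (0 : ℝ) M,
      (x - y) * (f x - f y) ≤ -lam * (x - y) ^ 2)
    (h0 : ρ < f 0) (hM1 : -ehat ≤ f M) (hM2 : f M ≤ 0) :
    ∃ μstar ∈ Set.Icc (0 : ℝ) M, f μstar = ρ ∧ 0 < μstar ∧ μstar < M ∧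
      M - μstar ≤ (ρ + ehat) / lam ∧
      ∀ y ∈ Set.Icc (0 : ℝ) M, f y = ρ → y = μstar := by
  -- The intermediate value theorem on the open interval: `f M ≤ 0 < ρ < f 0`.
  obtain ⟨m, ⟨hm0, hmM⟩, hm⟩ :=
    intermediate_value_Ioo' hM.le hf (show ρ ∈ Set.Ioo (f M) (f 0) from ⟨by linarith, h0⟩)
  have hmI : m ∈ Set.Icc (0 : ℝ) M := ⟨hm0.le, hmM.le⟩
  refine ⟨m, hmI, hm, hm0, hmM, ?_, ?_⟩
  · have h := hmono M ⟨hM.le, le_rfl⟩ m hmI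
    rw [hm] at h
    have hpos : 0 < M - m := sub_pos.mpr hmM
    -- Divide the strong monotonicity inequality at `M`, `m` by `M - m > 0`.
    have h' : lam * (M - m) ≤ ρ - f M :=
      le_of_mul_le_mul_left (by linarith : (M - m) * (lam * (M - m)) ≤ (M - m) * (ρ - f M)) hpos
    rw [le_div_iff₀ hlam]
    linarith
  · intro y hy hfy
    have h := hmono y hy m hmI
    rw [hfy, hm, sub_self, mul_zero] at h
    have hsq : (y - m) ^ 2 ≤ 0 := by
      by_contra! hlt
      linarith [mul_pos hlam hlt]
    exact sub_eq_zero.mp (pow_eq_zero_iff two_ne_zero |>.mp (le_antisymm hsq (sq_nonneg _)))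
end

section
/- Let v and d be independent real-valued random variables on a probability space, and let Δ > 0, μ̲ > 0 and ν̄ ≥ 0. Assume 0 ≤ d ≤ Δ/μ̲ almost surely, and that the law of v satisfies P(v ∈ A) ≤ ν̄·Leb(A) for every Borel set A ⊆ ℝ (i.e., v has a density bounded above by ν̄). Then for all real numbers 0 ≤ μ_H ≤ μ_0: P( μ_H·d ≤ Δ·v < μ_0·d ) ≤ (ν̄/μ̲)·(μ_0 − μ_H). -/
open MeasureTheory

/-!
Conditionally on `d = y`, the event says that `v` lies in the interval `[μH y / Δ, μ0 y / Δ)`,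
whose length `(μ0 - μH) y / Δ` is at most `(μ0 - μH) / mulow` because `0 ≤ y ≤ Δ / mulow`.
The bounded density turns this into a uniform bound on the conditional probability, and
independence (Tonelli for the product law) lets it be averaged over `y`.
-/

/-- Probability estimate (Equation (31) of the paper): if the valuation `v` has a
density bounded above by `ν̄`, the competing bid `d` is supported in `[0, Δ/μ̲]`
and independent of `v`, then for `0 ≤ μ_H ≤ μ_0`,
`ℙ(μ_H·d ≤ Δ·v < μ_0·d) ≤ (ν̄/μ̲)·(μ_0 - μ_H)`. -/
theorem stmt_11 {Ω : Type*} [MeasurableSpace Ω] (P : Measure Ω) [IsProbabilityMeasure P]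
    (v d : Ω → ℝ) (hv : Measurable v) (hd : Measurable d)
    (hind : ProbabilityTheory.IndepFun v d P)
    (Δ mulow nubar : ℝ) (hΔ : 0 < Δ) (hmulow : 0 < mulow) (hnubar : 0 ≤ nubar)
    (hdbound : ∀ᵐ ω ∂P, 0 ≤ d ω ∧ d ω ≤ Δ / mulow)
    (hdens : ∀ A : Set ℝ, MeasurableSet A →
      P (v ⁻¹' A) ≤ ENNReal.ofReal nubar * MeasureTheory.volume A)
    (μH μ0 : ℝ) (h0 : 0 ≤ μH) (h1 : μH ≤ μ0) :
    P {ω | μH * d ω ≤ Δ * v ω ∧ Δ * v ω < μ0 * d ω}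
      ≤ ENNReal.ofReal (nubar / mulow * (μ0 - μH)) := by
  set S : Set (ℝ × ℝ) := {p | μH * p.2 ≤ Δ * p.1 ∧ Δ * p.1 < μ0 * p.2} with hS
  have hSm : MeasurableSet S := by
    have hle : MeasurableSet {p : ℝ × ℝ | μH * p.2 ≤ Δ * p.1} :=
      measurableSet_le (by fun_prop) (by fun_prop)
    have hlt : MeasurableSet {p : ℝ × ℝ | Δ * p.1 < μ0 * p.2} :=
      measurableSet_lt (by fun_prop) (by fun_prop)
    exact hle.inter hlt
  have hprob : IsProbabilityMeasure (P.map d) :=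
    Measure.isProbabilityMeasure_map hd.aemeasurable
  have hlaw : P {ω | μH * d ω ≤ Δ * v ω ∧ Δ * v ω < μ0 * d ω}
      = ∫⁻ y, P.map v ((fun x => (x, y)) ⁻¹' S) ∂(P.map d) := by
    rw [← Measure.prod_apply_symm hSm,
      ← hind.map_prod_eq_prod_map_map hv.aemeasurable hd.aemeasurable,
      Measure.map_apply (hv.prodMk hd) hSm]
    rfl
  have hdlaw : ∀ᵐ y ∂(P.map d), 0 ≤ y ∧ y ≤ Δ / mulow :=
    (ae_map_iff hd.aemeasurable measurableSet_Icc).2 hdbound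
  have hslice : ∀ᵐ y ∂(P.map d), P.map v ((fun x => (x, y)) ⁻¹' S)
      ≤ ENNReal.ofReal (nubar / mulow * (μ0 - μH)) := by
    filter_upwards [hdlaw] with y hy
    have hIco : (fun x => (x, y)) ⁻¹' S = Set.Ico (μH * y / Δ) (μ0 * y / Δ) := by
      ext x
      simp only [hS, Set.mem_preimage, Set.mem_ofPred_eq, Set.mem_Ico, div_le_iff₀ hΔ,
        lt_div_iff₀ hΔ, mul_comm x Δ]
    rw [hIco, Measure.map_apply hv measurableSet_Ico]
    refine (hdens _ measurableSet_Ico).trans ?_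
    rw [Real.volume_Ico, ← ENNReal.ofReal_mul hnubar]
    refine ENNReal.ofReal_le_ofReal ?_
    have hyΔ : y / Δ ≤ 1 / mulow := by
      rw [div_le_iff₀ hΔ]
      exact hy.2.trans_eq (by ring)
    calc nubar * (μ0 * y / Δ - μH * y / Δ)
        = nubar * (μ0 - μH) * (y / Δ) := by ring
      _ ≤ nubar * (μ0 - μH) * (1 / mulow) :=
          mul_le_mul_of_nonneg_left hyΔ (mul_nonneg hnubar (sub_nonneg.2 h1))
      _ = nubar / mulow * (μ0 - μH) := by ring
  rw [hlaw]
  calc ∫⁻ y, P.map v ((fun x => (x, y)) ⁻¹' S) ∂(P.map d)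
      ≤ ∫⁻ _, ENNReal.ofReal (nubar / mulow * (μ0 - μH)) ∂(P.map d) :=
        lintegral_mono_ae hslice
    _ = ENNReal.ofReal (nubar / mulow * (μ0 - μH)) := by simp
end

section
/- Let I be a finite set of N ≥ 1 agents, let W ⊆ I with |W| = γ where 0 ≤ γ ≤ N, let ε ≥ 0 and p ≥ 0, and let μ : I → ℝ. Define μ′ : I → ℝ by μ′_i = μ_i + ε·p·(1 − γ/N) for i ∈ W and μ′_i = μ_i − ε·γ·p/N for i ∉ W. If there exist b, s ∈ I with μ′_b = max_{i∈I} μ′_i and μ′_s = min_{i∈I} μ′_i such that it is not the case that (b ∈ W and s ∉ W), then max_{i∈I} μ′_i − min_{i∈I} μ′_i ≤ max_{i∈I} μ_i − min_{i∈I} μ_i. -/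
/-!
Every agent receives the same redistribution, so up to a common shift the update adds `ε * p` to
each winner and nothing to each loser. Unless `b` is a winner and `s` a loser, the gap between `b`
and `s` therefore does not grow; the new spread is the new gap `μ' b - μ' s`, and the old gap
`μ b - μ s` is at most the old spread.
-/

/-- Proposition 1 of Appendix E.3.8: one step of simultaneous adaptive karma pacing,
where the `γ` winners' multipliers increase by `ε·p·(1 - γ/N)` and the losers'
decrease by `ε·γ·p/N`. Unless the post-update maximum is attained by a winner while
the post-update minimum is attained by a loser, the spread of the multiplier profile
does not increase. -/
theorem stmt_15 {ι : Type*} [Fintype ι] [Nonempty ι] [DecidableEq ι] (N γ : ℕ) (hN : 1 ≤ N)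
    (hcard : Fintype.card ι = N) (W : Finset ι) (hW : W.card = γ) (hγ : γ ≤ N)
    (ε p : ℝ) (hε : 0 ≤ ε) (hp : 0 ≤ p) (μ μ' : ι → ℝ)
    (hμ' : ∀ i, μ' i = if i ∈ W then μ i + ε * p * (1 - (γ : ℝ) / N)
        else μ i - ε * (γ : ℝ) * p / N)
    (b s : ι)
    (hb : μ' b = Finset.univ.sup' Finset.univ_nonempty μ')
    (hs : μ' s = Finset.univ.inf' Finset.univ_nonempty μ')
    (hbs : ¬(b ∈ W ∧ s ∉ W)) :
    Finset.univ.sup' Finset.univ_nonempty μ' - Finset.univ.inf' Finset.univ_nonempty μ'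
      ≤ Finset.univ.sup' Finset.univ_nonempty μ - Finset.univ.inf' Finset.univ_nonempty μ := by
  have hmax : μ b ≤ Finset.univ.sup' Finset.univ_nonempty μ :=
    Finset.le_sup' μ (Finset.mem_univ b)
  have hmin : Finset.univ.inf' Finset.univ_nonempty μ ≤ μ s :=
    Finset.inf'_le μ (Finset.mem_univ s)
  -- The redistribution is common to all agents, so winners and losers differ only by `ε * p`.
  have hshift : ∀ i, μ' i = μ i + (if i ∈ W then ε * p else 0) - ε * (γ : ℝ) * p / N := by
    intro i
    rw [hμ' i]
    split_ifs <;> ring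
  have hεp : 0 ≤ ε * p := mul_nonneg hε hp
  -- The gap between `b` and `s` could grow only if `b` paid and `s` did not.
  have hgap : μ' b - μ' s ≤ μ b - μ s := by
    rw [hshift b, hshift s]
    by_cases hbW : b ∈ W
    · have hsW : s ∈ W := by
        by_contra h
        exact hbs ⟨hbW, h⟩
      simp only [hbW, hsW, if_true]
      linarith
    · by_cases hsW : s ∈ W <;> simp only [hbW, hsW, if_true, if_false] <;> linarith
  rw [← hb, ← hs]
  linarith
end

section
/- Let I be a finite set of N agents and γ a natural number with 1 ≤ γ ≤ N − 1. Let Δ > 0, v̲ ∈ (0, 1], μ̲ > 0, μ_m > 0 and ε > 0 satisfy μ̲ < (v̲/2)·μ_m and ε·Δ/μ̲ ≤ μ_m·min{ 1 − v̲/2, v̲/(2·(v̲ + 2)), (1/(2·v̲))·(1 − γ/N)^{−1} }. Let v : I → [v̲, 1], let μ : I → ℝ with Σ_{i∈I} μ_i = N·μ_m, and define bids b_i = Δ·v_i / max(μ_i, μ̲). Let W ⊆ I with |W| = γ and b_i > b_j for all i ∈ W and all j ∉ W, and set p = max_{j∉W} b_j. Define μ′_i = μ_i + ε·p·(1 − γ/N)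 for i ∈ W and μ′_i = μ_i − ε·γ·p/N for i ∉ W. If there exist b ∈ W with μ′_b = max_{i∈I} μ′_i and s ∉ W with μ′_s = min_{i∈I} μ′_i, then both max_{i∈I} μ_i − min_{i∈I} μ_i and max_{i∈I} μ′_i − min_{i∈I} μ′_i are at most μ_m·( (2/v̲)·(1 − γ/N)^{−1} − v̲/2 ). -/
/-!
Write `q = ε * p`, `x = μ iw`, `y = μ il`. The step-size condition gives `0 < q ≤ mum / 6`.
Since the update shifts any two multipliers relative to each other by at most `q`, extremality of
`iw` and `il` after the update yields `y - q ≤ μ i ≤ x + q` for every `i`. Hence the spread of `μ`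
is at most `x - y + 2 * q`, while that of `μ'` is exactly `x - y + q`; comparing with the mean
gives `mum ≤ x + q` and `y - q ≤ mum`.

The winner `iw` outbids the loser `il`, so `vlow * max x mulow < max y mulow`. As
`vlow * x ≥ vlow * (mum - q) > mulow`, the projection is inactive at `il` and `vlow * x < y`.
Therefore `vlow * (x - y + 2 * q) ≤ (mum + q) * (1 - vlow) + 2 * q * vlow ≤ 7 / 6 * mum`, below
`vlow` times the claimed bound, which is at least `mum * (2 - vlow ^ 2 / 2) ≥ 3 / 2 * mum`.
-/

/-- Proposition 2 of Appendix E.3.8: one step of simultaneous adaptive karma pacing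
with bids `b i = Δ·v i / max (μ i) μ̲`, winners `W` (of cardinality `γ`) beating all
losers, price `p` equal to the highest losing bid, and updates increasing winners'
multipliers by `ε·p·(1 - γ/N)` and decreasing losers' by `ε·γ·p/N`. If the
post-update maximum is attained by a winner and the post-update minimum by a loser,
then the spreads of `μ` and `μ'` are both bounded by
`μ_m·((2/v̲)·(1 - γ/N)⁻¹ - v̲/2)`. -/
theorem stmt_16 {ι : Type*} [Fintype ι] [Nonempty ι] [DecidableEq ι] (N γ : ℕ)
    (hcard : Fintype.card ι = N) (hγ1 : 1 ≤ γ) (hγN : γ ≤ N - 1)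
    (Δ vlow mulow mum ε : ℝ)
    (hΔ : 0 < Δ) (hv0 : 0 < vlow) (hv1 : vlow ≤ 1)
    (hmulow : 0 < mulow) (hmum : 0 < mum) (hε : 0 < ε)
    (hproj : mulow < vlow / 2 * mum)
    (hstep : ε * Δ / mulow
      ≤ mum * min (min (1 - vlow / 2) (vlow / (2 * (vlow + 2))))
          (1 / (2 * vlow) * (1 - (γ : ℝ) / N)⁻¹))
    (v : ι → ℝ) (hv : ∀ i, vlow ≤ v i ∧ v i ≤ 1)
    (μ : ι → ℝ) (hsum : ∑ i, μ i = N * mum)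
    (b : ι → ℝ) (hb : ∀ i, b i = Δ * v i / max (μ i) mulow)
    (W : Finset ι) (hW : W.card = γ)
    (hwin : ∀ i ∈ W, ∀ j ∉ W, b j < b i)
    (p : ℝ) (hpmem : ∃ j ∉ W, b j = p) (hple : ∀ j ∉ W, b j ≤ p)
    (μ' : ι → ℝ)
    (hμ' : ∀ i, μ' i = if i ∈ W then μ i + ε * p * (1 - (γ : ℝ) / N)
        else μ i - ε * (γ : ℝ) * p / N)
    (iw : ι) (hiw : iw ∈ W)
    (hiwmax : μ' iw = Finset.univ.sup' Finset.univ_nonempty μ')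
    (il : ι) (hil : il ∉ W)
    (hilmin : μ' il = Finset.univ.inf' Finset.univ_nonempty μ') :
    Finset.univ.sup' Finset.univ_nonempty μ - Finset.univ.inf' Finset.univ_nonempty μ
        ≤ mum * (2 / vlow * (1 - (γ : ℝ) / N)⁻¹ - vlow / 2) ∧
    Finset.univ.sup' Finset.univ_nonempty μ' - Finset.univ.inf' Finset.univ_nonempty μ'
        ≤ mum * (2 / vlow * (1 - (γ : ℝ) / N)⁻¹ - vlow / 2) := by
  have hNpos : 0 < N := by omega
  have hNr : (0 : ℝ) < N := by exact_mod_cast hNpos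
  have hγr : (0 : ℝ) < γ := by exact_mod_cast hγ1
  have hγlt : (γ : ℝ) < N := by
    have : γ < N := by omega
    exact_mod_cast this
  have ha0 : 0 < (γ : ℝ) / N := div_pos hγr hNr
  have ha1 : (γ : ℝ) / N < 1 := (div_lt_one hNr).2 hγlt
  have hmaxpos : ∀ i, 0 < max (μ i) mulow := fun i => lt_max_of_lt_right hmulow
  have hq0 : 0 < ε * p := by
    obtain ⟨j, -, hj⟩ := hpmem
    rw [← hj, hb]
    have := (hv j).1
    have := hmaxpos j
    have : 0 < v j := by linarith
    positivity
  have hq : ε * p ≤ mum / 6 := by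
    obtain ⟨j, -, hj⟩ := hpmem
    have h1 : p ≤ Δ / mulow := by
      rw [← hj, hb]
      have := (hv j).2
      exact div_le_div₀ hΔ.le (by nlinarith) hmulow (le_max_right _ _)
    have h2 : ε * p ≤ ε * Δ / mulow := by
      rw [mul_div_assoc]
      exact mul_le_mul_of_nonneg_left h1 hε.le
    have h3 : vlow / (2 * (vlow + 2)) ≤ 1 / 6 := by
      rw [div_le_div_iff₀ (by positivity) (by norm_num)]
      linarith
    have h4 := mul_le_mul_of_nonneg_left
      (((min_le_left _ (1 / (2 * vlow) * (1 - (γ : ℝ) / N)⁻¹)).trans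
        (min_le_right (1 - vlow / 2) _)).trans h3) hmum.le
    linarith
  generalize hqdef : ε * p = q at hq0 hq
  have hμW : ∀ i ∈ W, μ' i = μ i + q * (1 - (γ : ℝ) / N) := fun i hi => by
    rw [hμ', if_pos hi, hqdef]
  have hμL : ∀ i, i ∉ W → μ' i = μ i - q * ((γ : ℝ) / N) := fun i hi => by
    rw [hμ', if_neg hi, ← hqdef]
    ring
  have hmax : ∀ i, μ' i ≤ μ' iw := fun i => by
    rw [hiwmax]
    exact Finset.le_sup' μ' (Finset.mem_univ i)
  have hmin : ∀ i, μ' il ≤ μ' i := fun i => by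
    rw [hilmin]
    exact Finset.inf'_le μ' (Finset.mem_univ i)
  have hxW := hμW iw hiw
  have hyL := hμL il hil
  have hub : ∀ i, μ i ≤ μ iw + q := fun i => by
    have := hmax i
    by_cases hi : i ∈ W
    · have := hμW i hi
      linarith
    · have := hμL i hi
      linarith
  have hlb : ∀ i, μ il - q ≤ μ i := fun i => by
    have := hmin i
    by_cases hi : i ∈ W
    · have := hμW i hi
      linarith
    · have := hμL i hi
      linarith
  -- Comparing the mean `mum` with the pointwise bounds on `μ`.
  have hx : mum ≤ μ iw + q := by
    have h := Finset.sum_le_card_nsmul Finset.univ μ _ fun i _ => hub i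
    rw [hsum, Finset.card_univ, hcard, nsmul_eq_mul] at h
    exact le_of_mul_le_mul_left h hNr
  have hy : μ il - q ≤ mum := by
    have h := Finset.card_nsmul_le_sum Finset.univ μ _ fun i _ => hlb i
    rw [hsum, Finset.card_univ, hcard, nsmul_eq_mul] at h
    exact le_of_mul_le_mul_left h hNr
  -- `iw` outbids `il`, and valuations lie in `[vlow, 1]`.
  have hbid : vlow * max (μ iw) mulow < max (μ il) mulow := by
    have h := hwin iw hiw il hil
    rw [hb, hb, div_lt_div_iff₀ (hmaxpos _) (hmaxpos _)] at h
    have h' : v il * max (μ iw) mulow < v iw * max (μ il) mulow := by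
      rw [mul_assoc, mul_assoc] at h
      exact lt_of_mul_lt_mul_left h hΔ.le
    have h1 := mul_le_mul_of_nonneg_right (hv il).1 (hmaxpos iw).le
    have h2 := mul_le_mul_of_nonneg_right (hv iw).2 (hmaxpos il).le
    linarith
  have hxy : vlow * μ iw < μ il := by
    have h1 : vlow * μ iw < max (μ il) mulow :=
      (mul_le_mul_of_nonneg_left (le_max_left _ _) hv0.le).trans_lt hbid
    -- The projection is inactive at `il`: `mulow < vlow * mum / 2 ≤ vlow * μ iw`.
    have h2 : mulow < vlow * μ iw := by nlinarith
    rcases lt_max_iff.1 h1 with h | h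
    · exact h
    · linarith
  have hspread : μ iw - μ il + 2 * q ≤ mum * (2 / vlow * (1 - (γ : ℝ) / N)⁻¹ - vlow / 2) := by
    have hc : 1 ≤ (1 - (γ : ℝ) / N)⁻¹ := (one_le_inv₀ (by linarith)).2 (by linarith)
    have h1 : mum * (2 / vlow - vlow / 2)
        ≤ mum * (2 / vlow * (1 - (γ : ℝ) / N)⁻¹ - vlow / 2) := by
      have := le_mul_of_one_le_right (by positivity : 0 ≤ 2 / vlow) hc
      exact mul_le_mul_of_nonneg_left (by linarith) hmum.le
    refine le_trans ?_ h1
    have h2 : vlow * (μ iw - μ il + 2 * q) ≤ vlow * (mum * (2 / vlow - vlow / 2)) := by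
      have h3 : vlow * (mum * (2 / vlow - vlow / 2)) = mum * (2 - vlow * vlow / 2) := by
        field_simp
      rw [h3]
      have h4 : μ il * (1 - vlow) ≤ (mum + q) * (1 - vlow) :=
        mul_le_mul_of_nonneg_right (by linarith) (by linarith)
      have h5 : q * (1 + vlow) ≤ mum / 6 * (1 + vlow) :=
        mul_le_mul_of_nonneg_right hq (by linarith)
      have h6 : mum * (vlow * vlow) ≤ mum * 1 :=
        mul_le_mul_of_nonneg_left (by nlinarith) hmum.le
      have h7 := mul_pos hmum hv0
      linarith
    exact le_of_mul_le_mul_left h2 hv0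
  constructor
  · have h1 := Finset.sup'_le Finset.univ_nonempty μ fun i _ => hub i
    have h2 := Finset.le_inf' Finset.univ_nonempty μ fun i _ => hlb i
    linarith
  · rw [← hiwmax, ← hilmin]
    linarith
end

section
/- Let I be a finite set of N agents, γ ∈ ℕ with 1 ≤ γ ≤ N − 1, and Δ > 0, v̲ ∈ (0, 1], μ̲ > 0, μ_m > 0, ε > 0 with μ̲ < (v̲/2)·μ_m and ε·Δ/μ̲ ≤ μ_m·min{ 1 − v̲/2, v̲/(2·(v̲ + 2)), (1/(2·v̲))·(1 − γ/N)^{−1} }. Set B = μ_m·( (2/v̲)·(1 − γ/N)^{−1} − v̲/2 ). For t = 1, …, T let v_{i,t} ∈ [v̲, 1] for each i ∈ I, and suppose the multiplier profiles μ_t : I → ℝ evolve as follows: b_{i,t} = Δ·v_{i,t}/max(μ_{i,t}, μ̲); there is W_t ⊆ I with |W_t| = γ and b_{i,t} > b_{j,t} for all i ∈ W_t and j ∉ W_t; p_t = max_{j∉W_t} b_{j,t}; and μ_{i,t+1} = μ_{i,t} + ε·p_t·(1 − γ/N) if i ∈ W_t and μ_{i,t+1} = μ_{i,t} − ε·γ·p_t/N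 otherwise. If Σ_{i∈I} μ_{i,1} = N·μ_m and max_i μ_{i,1} − min_i μ_{i,1} ≤ B, then for every t = 1, …, T + 1: max_i μ_{i,t} − min_i μ_{i,t} ≤ B and μ_m − B ≤ μ_{i,t} ≤ μ_m + B for every i ∈ I. -/
/-!
The average multiplier `mum` is preserved, since winners gain in total exactly what losers lose
(`sum_step`).  Hence some multiplier is at most `mum` and some is at least `mum`, so a spread of at
most `B` confines the whole profile to `[mum - B, mum + B]`; the task is to preserve the spread.

In one step a difference of multipliers changes only between a winner and a loser, and then by
`ε * p ≤ ε * Δ / mulow =: δ` in the winner's favour.  Suppose this pushed winner `i` more than `B`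
above loser `j` (`spread_step`).  Winning means that the losers' multipliers, floored at `mulow`,
exceed `vlow` times the floored multiplier of `i`.
* If `μ j ≤ mulow`, then `μ i < mulow / vlow < mum / 2`; as `δ ≤ mum / 6`, `j` already lies more
  than `B` below an agent at or above the average: a contradiction.
* Otherwise `μ i > B - δ ≥ mum * c / vlow` with `c = (1 - γ/N)⁻¹`, so each of the `N - γ = N / c`
  losers has multiplier above `mum * c`, and the losers' multipliers alone sum to at least `N * mum`.
  All winners have positive multipliers, being within `B` of `i`, so the sum exceeds `N * mum`:
  again a contradiction.
-/

/-- The redistribution of the payments preserves the sum of the multipliers. -/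
lemma sum_step {ι : Type*} [Fintype ι] [DecidableEq ι] (N γ : ℕ)
    (hcard : Fintype.card ι = N) (hN : 0 < N) (x y : ι → ℝ) (W : Finset ι) (hW : W.card = γ)
    (ε p : ℝ)
    (hupd : ∀ i, y i = if i ∈ W then x i + ε * p * (1 - (γ : ℝ) / N)
        else x i - ε * (γ : ℝ) * p / N) :
    ∑ i, y i = ∑ i, x i := by
  have hN' : (N : ℝ) ≠ 0 := by positivity
  have h : ∀ i, y i = x i + ((if i ∈ W then ε * p else 0) - ε * (γ : ℝ) * p / N) := by
    intro i
    rw [hupd i]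
    split_ifs <;> ring
  simp only [h, Finset.sum_add_distrib, Finset.sum_sub_distrib, Finset.sum_ite_mem,
    Finset.univ_inter, Finset.sum_const, Finset.card_univ, hcard, hW, nsmul_eq_mul]
  field_simp
  ring

/-- A step of the dynamics cannot push the winner `i` more than `B` above the loser `j`.
Here `d` is the increment of the difference, and `c` stands for `(1 - γ/N)⁻¹`. -/
lemma spread_step {ι : Type*} [Fintype ι] [DecidableEq ι] (N γ : ℕ)
    (hcard : Fintype.card ι = N)
    (vlow mulow mum B c d : ℝ) (hv0 : 0 < vlow) (hv1 : vlow ≤ 1)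
    (hmulow : 0 < mulow) (hmum : 0 < mum) (hc1 : 1 ≤ c) (hc : ((N : ℝ) - γ) * c = N)
    (hproj : mulow < vlow / 2 * mum)
    (hd1 : d ≤ mum / 6) (hd2 : d ≤ mum * (c / (2 * vlow)))
    (hB : B = mum * (2 * c / vlow - vlow / 2))
    (x : ι → ℝ) (W : Finset ι) (hW : W.card = γ)
    (hwin : ∀ i ∈ W, ∀ j ∉ W, vlow * max (x i) mulow < max (x j) mulow)
    (hsum : ∑ i, x i = N * mum) (hspread : ∀ i j, x i - x j ≤ B)
    (i j : ι) (hi : i ∈ W) (hj : j ∉ W) : x i - x j + d ≤ B := by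
  by_contra! hlt
  have hcv : vlow / 2 ≤ c / (2 * vlow) := by
    rw [div_le_div_iff₀ (by norm_num) (by positivity)]
    nlinarith
  have hBd : mum * (c / vlow) ≤ B - d := by
    have h1 : mum * (vlow / 2) ≤ mum * (c / (2 * vlow)) :=
      mul_le_mul_of_nonneg_left hcv hmum.le
    have h2 : mum * (2 * c / vlow) = 4 * (mum * (c / (2 * vlow))) := by
      field_simp; ring
    have h3 : mum * (c / vlow) = 2 * (mum * (c / (2 * vlow))) := by
      field_simp
    rw [hB, mul_sub]
    linarith
  have hmulow_lt : mulow < mum := by nlinarith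
  have hmc : mum ≤ mum * c := le_mul_of_one_le_right hmum.le hc1
  have hxi : vlow * x i ≤ vlow * max (x i) mulow :=
    mul_le_mul_of_nonneg_left (le_max_left _ _) hv0.le
  have hxj : mulow < x j := by
    by_contra! hle
    have h1 := hwin i hi j hj
    rw [max_eq_right hle] at h1
    have hxi2 : x i < mum / 2 := by
      have : vlow * x i < vlow * (mum / 2) := by linarith
      exact lt_of_mul_lt_mul_left this hv0.le
    obtain ⟨k, -, hk⟩ : ∃ k ∈ Finset.univ, mum ≤ x k := by
      apply Finset.exists_le_of_sum_le ⟨i, Finset.mem_univ i⟩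
      simp [hsum, hcard]
    linarith [hspread k j]
  have hxi3 : mum * c < vlow * max (x i) mulow := by
    have h1 : mum * (c / vlow) < x i := by linarith
    have h2 := mul_lt_mul_of_pos_left h1 hv0
    have h3 : vlow * (mum * (c / vlow)) = mum * c := by field_simp
    linarith
  have hlose : ∀ k, k ∉ W → mum * c < x k := by
    intro k hk
    rcases lt_max_iff.1 (hxi3.trans (hwin i hi k hk)) with h | h
    · exact h
    · linarith
  have hpos : ∀ k, 0 < x k := by
    intro k
    linarith [hspread i k, hlose j hj]
  have hS1 : 0 < ∑ k ∈ W, x k :=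
    Finset.sum_pos (fun k _ => hpos k) ⟨i, hi⟩
  have hS2 : (N : ℝ) * mum ≤ ∑ k ∈ Wᶜ, x k := by
    have h1 := Finset.card_nsmul_le_sum Wᶜ x (mum * c)
      (fun k hk => (hlose k (Finset.mem_compl.1 hk)).le)
    have hle : γ ≤ N := by rw [← hW, ← hcard]; exact Finset.card_le_univ W
    rw [Finset.card_compl, hcard, hW, nsmul_eq_mul, Nat.cast_sub hle] at h1
    calc (N : ℝ) * mum = ((N : ℝ) - γ) * (mum * c) := by linear_combination (-mum) * hc
      _ ≤ _ := h1
  have := Finset.sum_add_sum_compl W x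
  linarith

/-- Control of the hitting time under simultaneous adaptive karma pacing
(Appendix E.3.8): under the stated parameter conditions, if the initial multiplier
profile sums to `N·μ_m` and has spread at most
`B = μ_m·((2/v̲)·(1 - γ/N)⁻¹ - v̲/2)`, then for the whole horizon the spread stays
at most `B` and every multiplier stays in `[μ_m - B, μ_m + B]`. -/
theorem stmt_17 {ι : Type*} [Fintype ι] [Nonempty ι] [DecidableEq ι] (N γ T : ℕ)
    (hcard : Fintype.card ι = N) (hγ1 : 1 ≤ γ) (hγN : γ ≤ N - 1)
    (Δ vlow mulow mum ε B : ℝ)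
    (hΔ : 0 < Δ) (hv0 : 0 < vlow) (hv1 : vlow ≤ 1)
    (hmulow : 0 < mulow) (hmum : 0 < mum) (hε : 0 < ε)
    (hproj : mulow < vlow / 2 * mum)
    (hstep : ε * Δ / mulow
      ≤ mum * min (min (1 - vlow / 2) (vlow / (2 * (vlow + 2))))
          (1 / (2 * vlow) * (1 - (γ : ℝ) / N)⁻¹))
    (hB : B = mum * (2 / vlow * (1 - (γ : ℝ) / N)⁻¹ - vlow / 2))
    (v : ℕ → ι → ℝ) (hv : ∀ t, 1 ≤ t → t ≤ T → ∀ i, vlow ≤ v t i ∧ v t i ≤ 1)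
    (μ : ℕ → ι → ℝ) (b : ℕ → ι → ℝ)
    (hb : ∀ t, 1 ≤ t → t ≤ T → ∀ i, b t i = Δ * v t i / max (μ t i) mulow)
    (W : ℕ → Finset ι) (hW : ∀ t, 1 ≤ t → t ≤ T → (W t).card = γ)
    (hwin : ∀ t, 1 ≤ t → t ≤ T → ∀ i ∈ W t, ∀ j ∉ W t, b t j < b t i)
    (p : ℕ → ℝ)
    (hpmem : ∀ t, 1 ≤ t → t ≤ T → ∃ j ∉ W t, b t j = p t)
    (hple : ∀ t, 1 ≤ t → t ≤ T → ∀ j ∉ W t, b t j ≤ p t)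
    (hupd : ∀ t, 1 ≤ t → t ≤ T → ∀ i,
      μ (t + 1) i = if i ∈ W t then μ t i + ε * p t * (1 - (γ : ℝ) / N)
        else μ t i - ε * (γ : ℝ) * p t / N)
    (hinit_sum : ∑ i, μ 1 i = N * mum)
    (hinit_spread :
      Finset.univ.sup' Finset.univ_nonempty (μ 1)
        - Finset.univ.inf' Finset.univ_nonempty (μ 1) ≤ B) :
    ∀ t, 1 ≤ t → t ≤ T + 1 →
      (Finset.univ.sup' Finset.univ_nonempty (μ t)
          - Finset.univ.inf' Finset.univ_nonempty (μ t) ≤ B)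
        ∧ ∀ i, mum - B ≤ μ t i ∧ μ t i ≤ mum + B := by
  have hγlt : γ < N := by omega
  have hN0 : (0 : ℝ) < N := by exact_mod_cast (by omega : 0 < N)
  have hγR : (γ : ℝ) < N := by exact_mod_cast hγlt
  have hq : 0 < 1 - (γ : ℝ) / N := by
    rw [sub_pos, div_lt_one hN0]
    exact hγR
  have hq1 : 1 - (γ : ℝ) / N ≤ 1 := by
    have : 0 ≤ (γ : ℝ) / N := by positivity
    linarith
  set c := (1 - (γ : ℝ) / N)⁻¹ with hcdef
  have hc1 : 1 ≤ c := (one_le_inv₀ hq).2 hq1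
  have hc : ((N : ℝ) - γ) * c = N := by
    have h : (N : ℝ) - γ = N * (1 - (γ : ℝ) / N) := by field_simp
    rw [h, mul_assoc, hcdef, mul_inv_cancel₀ hq.ne', mul_one]
  have hδ1 : ε * Δ / mulow ≤ mum / 6 := by
    have h1 : ε * Δ / mulow ≤ mum * (vlow / (2 * (vlow + 2))) :=
      hstep.trans (mul_le_mul_of_nonneg_left
        ((min_le_left _ _).trans (min_le_right _ _)) hmum.le)
    have h2 : vlow / (2 * (vlow + 2)) ≤ 1 / 6 := by
      rw [div_le_div_iff₀ (by positivity) (by norm_num)]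
      linarith
    have h3 := mul_le_mul_of_nonneg_left h2 hmum.le
    linarith
  have hδ2 : ε * Δ / mulow ≤ mum * (c / (2 * vlow)) := by
    have h1 := hstep.trans (mul_le_mul_of_nonneg_left (min_le_right _ _) hmum.le)
    rwa [one_div_mul_eq_div] at h1
  have hB' : B = mum * (2 * c / vlow - vlow / 2) := by rw [hB]; ring
  -- Both invariants in pointwise form: preserved sum and pairwise differences at most `B`.
  have key : ∀ t, 1 ≤ t → t ≤ T + 1 →
      (∑ i, μ t i = N * mum) ∧ ∀ i j, μ t i - μ t j ≤ B := by
    intro t ht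
    induction t, ht using Nat.le_induction with
    | base =>
      intro _
      refine ⟨hinit_sum, fun i j => ?_⟩
      have h1 := Finset.le_sup' (μ 1) (Finset.mem_univ i)
      have h2 := Finset.inf'_le (μ 1) (Finset.mem_univ j)
      linarith
    | succ t ht ih =>
      intro htT
      have htT' : t ≤ T := by omega
      obtain ⟨hsum, hspr⟩ := ih (by omega)
      have hmax : ∀ i, 0 < max (μ t i) mulow := fun i => lt_max_of_lt_right hmulow
      obtain ⟨hp0, hp1⟩ : 0 ≤ ε * p t ∧ ε * p t ≤ ε * Δ / mulow := by
        obtain ⟨j, -, hj⟩ := hpmem t ht htT'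
        obtain ⟨hvj, hvj1⟩ := hv t ht htT' j
        have hvj0 : 0 ≤ v t j := hv0.le.trans hvj
        rw [← hj, hb t ht htT' j]
        refine ⟨by have := hmax j; positivity, ?_⟩
        rw [mul_div_assoc ε Δ]
        refine mul_le_mul_of_nonneg_left ?_ hε.le
        exact div_le_div₀ hΔ.le (mul_le_of_le_one_right hΔ.le hvj1) hmulow (le_max_right _ _)
      have hwin' : ∀ i ∈ W t, ∀ j ∉ W t,
          vlow * max (μ t i) mulow < max (μ t j) mulow := by
        intro i hi j hj
        have h := hwin t ht htT' i hi j hj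
        rw [hb t ht htT', hb t ht htT', div_lt_div_iff₀ (hmax j) (hmax i), mul_assoc,
          mul_assoc] at h
        have h := lt_of_mul_lt_mul_left h hΔ.le
        have h1 := mul_le_mul_of_nonneg_right (hv t ht htT' j).1 (hmax i).le
        have h2 := mul_le_mul_of_nonneg_right (hv t ht htT' i).2 (hmax j).le
        linarith
      refine ⟨(sum_step N γ hcard (by omega) (μ t) _ (W t) (hW t ht htT') ε (p t)
        (hupd t ht htT')).trans hsum, fun i j => ?_⟩
      have hij := hspr i j
      have hgain : ε * p t * (1 - (γ : ℝ) / N) = ε * p t - ε * (γ : ℝ) * p t / N := by ring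
      rw [hupd t ht htT' i, hupd t ht htT' j, hgain]
      by_cases hi : i ∈ W t <;> by_cases hj : j ∈ W t <;> simp only [hi, hj, if_true, if_false]
      · linarith
      · have := spread_step N γ hcard vlow mulow mum B c (ε * p t) hv0 hv1 hmulow hmum hc1 hc
          hproj (hp1.trans hδ1) (hp1.trans hδ2) hB' (μ t) (W t) (hW t ht htT') hwin' hsum hspr
          i j hi hj
        linarith
      · linarith
      · linarith
  intro t ht htT
  obtain ⟨hsum, hspr⟩ := key t ht htT
  refine ⟨?_, fun i => ⟨?_, ?_⟩⟩
  · obtain ⟨i, -, hi⟩ := Finset.exists_mem_eq_sup' Finset.univ_nonempty (μ t)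
    obtain ⟨j, -, hj⟩ := Finset.exists_mem_eq_inf' Finset.univ_nonempty (μ t)
    rw [hi, hj]
    exact hspr i j
  · obtain ⟨k, -, hk⟩ : ∃ k ∈ Finset.univ, mum ≤ μ t k := by
      apply Finset.exists_le_of_sum_le Finset.univ_nonempty
      simp [hsum, hcard]
    linarith [hspr k i]
  · obtain ⟨k, -, hk⟩ : ∃ k ∈ Finset.univ, μ t k ≤ mum := by
      apply Finset.exists_le_of_sum_le Finset.univ_nonempty
      simp [hsum, hcard]
    linarith [hspr i k]
end

section
/- Let Δ > 0, v̲ ∈ (0, 1], 0 < d̲ ≤ d̄, and natural numbers γ, N with 1 ≤ γ ≤ N. Let μ̲, μ̄, ε, μ_1, k_1 be reals satisfying ε > 0, 0 < μ̲, μ̲ + ε·d̄ < Δ·v̲/d̄, μ̄ − ε·d̄ > Δ/d̲, μ̲ ≤ μ_1 ≤ μ̄, and k_1 > (μ̄ − μ_1)/ε + Δ/μ̲. For t = 1, …, T let v_t ∈ [v̲, 1], d_t ∈ [d̲, d̄] and g_t ∈ [0, (γ/N)·d_t] be given, and define recursively: b_t = min( Δ·v_t / min(max(μ_t, μ̲),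 μ̄), k_t ); z_t = d_t if b_t > d_t and z_t = 0 otherwise; μ_{t+1} = μ_t + ε·(z_t − g_t); and k_{t+1} = k_t − z_t + g_t. Then for every t = 1, …, T + 1: μ̲ ≤ μ_t ≤ μ̄ and k_t > Δ/μ̲; in particular the projection in the bid is never active and the budget is never depleted. -/
/-!
The quantity `μ t + ε * k t` is conserved by the two updates, so
`ε * k t = μ1 + ε * k1 - μ t > (mubar - μ t) + ε * Δ / mulow`: as long as `μ t ≤ mubar`, the budget
exceeds `Δ / mulow`. Hence the budget cap in the bid does not bind and the bid is `Δ * v t / μ t`.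
A win then forces `μ t < Δ / dlow < mubar - ε * dbar`, a loss forces
`μ t ≥ Δ * vlow / dbar > mulow + ε * dbar`. Since `0 ≤ g t ≤ d t`, a win moves `μ` up by at most
`ε * dbar` and a loss moves it down by at most `ε * dbar`, so `μ` stays in `[mulow, mubar]`.
-/

/-- Control of the hitting time for a single agent running adaptive karma pacing
against stationary competition (Appendix E.2.6): bidding
`b t = min (Δ·v t / clamp(μ t)) (k t)` with clamp onto `[μ̲, μ̄]`, paying
`z t = d t` upon winning, gaining `g t ∈ [0, (γ/N)·d t]`, and updating
`μ (t+1) = μ t + ε(z t - g t)`, `k (t+1) = k t - z t + g t`. Under the stated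
parameter conditions the multiplier never leaves `[μ̲, μ̄]` and the budget always
exceeds `Δ/μ̲`: the projection is never active and the budget never depletes. -/
theorem stmt_18 (T N γ : ℕ) (hT : 1 ≤ T) (hγ1 : 1 ≤ γ) (hγN : γ ≤ N)
    (Δ vlow dlow dbar mulow mubar ε μ1 k1 : ℝ)
    (hΔ : 0 < Δ) (hv0 : 0 < vlow) (hv1 : vlow ≤ 1)
    (hd0 : 0 < dlow) (hdd : dlow ≤ dbar)
    (hε : 0 < ε) (hmulow : 0 < mulow)
    (hlowcond : mulow + ε * dbar < Δ * vlow / dbar)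
    (hhighcond : Δ / dlow < mubar - ε * dbar)
    (hμ1low : mulow ≤ μ1) (hμ1high : μ1 ≤ mubar)
    (hk1 : (mubar - μ1) / ε + Δ / mulow < k1)
    (v d g : ℕ → ℝ)
    (hv : ∀ t, 1 ≤ t → t ≤ T → vlow ≤ v t ∧ v t ≤ 1)
    (hd : ∀ t, 1 ≤ t → t ≤ T → dlow ≤ d t ∧ d t ≤ dbar)
    (hg : ∀ t, 1 ≤ t → t ≤ T → 0 ≤ g t ∧ g t ≤ (γ : ℝ) / N * d t)
    (μ k b z : ℕ → ℝ)
    (hμinit : μ 1 = μ1) (hkinit : k 1 = k1)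
    (hb : ∀ t, 1 ≤ t → t ≤ T →
      b t = min (Δ * v t / min (max (μ t) mulow) mubar) (k t))
    (hz : ∀ t, 1 ≤ t → t ≤ T → z t = if d t < b t then d t else 0)
    (hμupd : ∀ t, 1 ≤ t → t ≤ T → μ (t + 1) = μ t + ε * (z t - g t))
    (hkupd : ∀ t, 1 ≤ t → t ≤ T → k (t + 1) = k t - z t + g t) :
    ∀ t, 1 ≤ t → t ≤ T + 1 → mulow ≤ μ t ∧ μ t ≤ mubar ∧ Δ / mulow < k t := by
  -- The induction carries the conservation law, from which the budget bound follows.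
  have budget : ∀ t, μ t ≤ mubar → μ t + ε * k t = μ1 + ε * k1 → Δ / mulow < k t := by
    intro t hle hcons
    have h1 : (mubar - μ1) / ε < k1 - Δ / mulow := by linarith
    rw [div_lt_iff₀ hε] at h1
    refine lt_of_mul_lt_mul_left (?_ : ε * (Δ / mulow) < ε * k t) hε.le
    linarith
  have key : ∀ t, 1 ≤ t → t ≤ T + 1 →
      mulow ≤ μ t ∧ μ t ≤ mubar ∧ μ t + ε * k t = μ1 + ε * k1 := by
    intro t ht
    induction t, ht using Nat.le_induction with
    | base =>
      intro _
      rw [hμinit, hkinit]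
      exact ⟨hμ1low, hμ1high, rfl⟩
    | succ t ht ih =>
      intro htT
      have htT' : t ≤ T := by omega
      obtain ⟨hlo, hhi, hcons⟩ := ih (by omega)
      have hk := budget t hhi hcons
      obtain ⟨hvl, hvh⟩ := hv t ht htT'
      obtain ⟨hdl, hdh⟩ := hd t ht htT'
      obtain ⟨hg0, hg1⟩ := hg t ht htT'
      have hμpos : 0 < μ t := hmulow.trans_le hlo
      have hdpos : 0 < d t := hd0.trans_le hdl
      have hgd : g t ≤ d t := by
        have hγ : (γ : ℝ) / N ≤ 1 :=
          div_le_one_of_le₀ (by exact_mod_cast hγN) (Nat.cast_nonneg N)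
        exact hg1.trans (mul_le_of_le_one_left hdpos.le hγ)
      have hcap : Δ * v t / μ t ≤ k t := by
        have h : Δ * v t / μ t ≤ Δ / mulow :=
          div_le_div₀ hΔ.le (mul_le_of_le_one_right hΔ.le hvh) hmulow hlo
        exact h.trans hk.le
      have hbt : b t = Δ * v t / μ t := by
        rw [hb t ht htT', max_eq_left hlo, min_eq_left hhi, min_eq_left hcap]
      have hεg : 0 ≤ ε * g t := mul_nonneg hε.le hg0
      have hεgd : ε * g t ≤ ε * d t := mul_le_mul_of_nonneg_left hgd hε.le
      have hεd : ε * d t ≤ ε * dbar := mul_le_mul_of_nonneg_left hdh hε.le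
      rw [hμupd t ht htT', hkupd t ht htT']
      have hzt := hz t ht htT'
      rw [hbt] at hzt
      refine and_assoc.mp ⟨?_, by linear_combination hcons⟩
      split_ifs at hzt with hwin
      · have hlt : μ t < Δ / dlow := by
          rw [lt_div_iff₀ hμpos] at hwin
          rw [lt_div_iff₀ hd0]
          have h1 : μ t * dlow ≤ μ t * d t := mul_le_mul_of_nonneg_left hdl hμpos.le
          have h2 : Δ * v t ≤ Δ := mul_le_of_le_one_right hΔ.le hvh
          linarith
        rw [hzt, mul_sub]
        constructor <;> linarith
      · have hge : Δ * vlow / dbar ≤ μ t := by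
          rw [not_lt, div_le_iff₀ hμpos] at hwin
          rw [div_le_iff₀ (hd0.trans_le hdd)]
          have h1 : μ t * d t ≤ μ t * dbar := mul_le_mul_of_nonneg_left hdh hμpos.le
          have h2 : Δ * vlow ≤ Δ * v t := mul_le_mul_of_nonneg_left hvl hΔ.le
          linarith
        rw [hzt, mul_sub]
        constructor <;> linarith
  intro t ht htT
  obtain ⟨hlo, hhi, hcons⟩ := key t ht htT
  exact ⟨hlo, hhi, budget t hhi hcons⟩
end

section
/- Let Δ ∈ (0, 1], 0 < μ̲ < μ̄, and constants 0 < ν̲ ≤ ν̄ and 0 < h̲ ≤ h̄. Let ν : ℝ → ℝ be continuous with ν̲ ≤ ν(z) ≤ ν̄ for all z ∈ [0, 1] and ∫₀¹ ν(z) dz = 1, and set V(y) = ∫₀^y ν(z) dz. Let h : ℝ → ℝ be continuous with h̲ ≤ h(x) ≤ h̄ for all x ∈ [0, Δ/μ̲] and ∫₀^{Δ/μ̲} h(x) dx = 1. Define Z(μ) = ∫₀^{Δ/μ} x·(1 − V(μ·x/Δ))·h(x) dx for μ ∈ [μ̲, μ̄]. Then for every μ ∈ (μ̲, μ̄), Z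 is differentiable at μ with Z′(μ) = −∫₀^{Δ/μ} (x²/Δ)·ν(μ·x/Δ)·h(x) dx, and moreover −Δ·ν̄/μ̲² ≤ Z′(μ) ≤ −ν̲·h̲·Δ³/(3·μ̄³). -/
/-!
Write `f(m, x) = x (1 - V(m x / Δ)) h(x)`, so that `Z(m) = ∫₀^{Δ/m} f(m, x) dx`. Since `V' = ν` is
continuous, `f` and `∂f/∂m` are jointly continuous, and Leibniz's rule with a moving endpoint
(`hasDerivAt_integral_moving_endpoint`) gives `Z'`. The boundary term vanishes because
`f(m, Δ/m)` contains the factor `1 - V(1) = 0`.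

For the bounds, `0 ≤ x ≤ Δ/m` gives `m x / Δ ∈ [0, 1]` and `x ∈ [0, Δ/mulow]`. Hence the integrand
of `-Z'` is at least `(x² / Δ) nulow hlow`, whose integral is `nulow hlow Δ² / (3 m³)`, and this
dominates the claimed bound because `Δ ≤ 1` and `m ≤ mubar`. It is at most
`(Δ / mulow²) nubar h(x)`, and `h` has mass at most one on `[0, Δ/m]`.
-/

open MeasureTheory Topology Filter

/-- Leibniz's rule for an integral whose integrand and upper endpoint both depend on the
parameter. The function `(s, c) ↦ ∫₀^c f(s, x) dx` has continuous partial derivatives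
`∫₀^c f'(s, x) dx` and `f(s, c)`, hence is strictly differentiable, and the chain rule along
`s ↦ (s, b s)` applies. -/
lemma hasDerivAt_integral_moving_endpoint {f f' : ℝ → ℝ → ℝ} {b : ℝ → ℝ} {b' m : ℝ}
    (hf : Continuous (Function.uncurry f)) (hf' : Continuous (Function.uncurry f'))
    (hd : ∀ s x, HasDerivAt (fun r => f r x) (f' s x) s) (hb : HasDerivAt b b' m) :
    HasDerivAt (fun s => ∫ x in (0 : ℝ)..b s, f s x)
      ((∫ x in (0 : ℝ)..b m, f' m x) + f m (b m) * b') m := by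
  have hfx : ∀ s, Continuous (f s) := fun s => hf.comp (by fun_prop : Continuous fun x => (s, x))
  have hfx' : ∀ s, Continuous (f' s) :=
    fun s => hf'.comp (by fun_prop : Continuous fun x => (s, x))
  have hparam : ∀ s c, HasDerivAt (fun r => ∫ x in (0 : ℝ)..c, f r x)
      (∫ x in (0 : ℝ)..c, f' s x) s := by
    intro s c
    -- A constant bound for `f'` on a compact rectangle dominates the differentiation.
    obtain ⟨C, hC⟩ := ((isCompact_Icc (a := s - 1) (b := s + 1)).prod
      (isCompact_uIcc (a := (0 : ℝ)) (b := c))).exists_bound_of_continuousOn hf'.continuousOn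
    refine (intervalIntegral.hasDerivAt_integral_of_dominated_loc_of_deriv_le
      (F := f) (F' := f') (bound := fun _ => C) (s := Set.Icc (s - 1) (s + 1))
      (Icc_mem_nhds (by linarith) (by linarith))
      (Eventually.of_forall fun r => (hfx r).aestronglyMeasurable)
      ((hfx s).intervalIntegrable _ _) (hfx' s).aestronglyMeasurable
      (Eventually.of_forall fun t ht r hr => ?_) intervalIntegrable_const
      (Eventually.of_forall fun t _ r _ => hd r t)).2
    exact hC (r, t) ⟨hr, Set.uIoc_subset_uIcc ht⟩
  have hend : ∀ s c, HasDerivAt (fun c => ∫ x in (0 : ℝ)..c, f s x) (f s c) c := fun s c =>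
    intervalIntegral.integral_hasDerivAt_right ((hfx s).intervalIntegrable _ _)
      ((hfx s).stronglyMeasurableAtFilter _ _) (hfx s).continuousAt
  have hcont : Continuous fun p : ℝ × ℝ => ∫ x in (0 : ℝ)..p.2, f' p.1 x :=
    intervalIntegral.continuous_parametric_intervalIntegral_of_continuous
      (f := fun (p : ℝ × ℝ) x => f' p.1 x)
      (hf'.comp (by fun_prop : Continuous fun q : (ℝ × ℝ) × ℝ => (q.1.1, q.2))) continuous_snd
  have hspan : Continuous fun r : ℝ => ContinuousLinearMap.toSpanSingleton ℝ r := by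
    exact (ContinuousLinearMap.toSpanSingletonCLE (𝕜 := ℝ) (E := ℝ)).continuous
  have hstrict := hasStrictFDerivAt_uncurry_coprod (𝕜 := ℝ) (u := (m, b m))
    (f := fun s c => ∫ x in (0 : ℝ)..c, f s x)
    (f₁ := fun s c => ContinuousLinearMap.toSpanSingleton ℝ (∫ x in (0 : ℝ)..c, f' s x))
    (f₂ := fun s c => ContinuousLinearMap.toSpanSingleton ℝ (f s c))
    (Eventually.of_forall fun v => (hparam v.1 v.2).hasFDerivAt)
    (Eventually.of_forall fun v => (hend v.1 v.2).hasFDerivAt)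
    (hspan.comp hcont).continuousAt (hspan.comp hf).continuousAt
  have := hstrict.hasFDerivAt.comp_hasDerivAt m ((hasDerivAt_id m).prodMk hb)
  refine HasDerivAt.congr_deriv (f := fun s => ∫ x in (0 : ℝ)..b s, f s x) this ?_
  simp [Function.HasUncurry.uncurry, mul_comm]


/-- Differentiability and derivative bounds for the expected karma expenditure
`Z(μ) = ∫₀^{Δ/μ} x·(1 - V(μx/Δ))·h(x) dx` (Appendix F.1, Equations (71)–(72)):
for `μ ∈ (μ̲, μ̄)`, `Z` has derivative
`Z'(μ) = -∫₀^{Δ/μ} (x²/Δ)·ν(μx/Δ)·h(x) dx`, which satisfies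
`-Δ·ν̄/μ̲² ≤ Z'(μ) ≤ -ν̲·h̲·Δ³/(3·μ̄³)`. -/
theorem stmt_19 (Δ mulow mubar nulow nubar hlow hbar : ℝ)
    (hΔ0 : 0 < Δ) (hΔ1 : Δ ≤ 1) (hmulow : 0 < mulow) (hmumu : mulow < mubar)
    (hnu0 : 0 < nulow) (hnu1 : nulow ≤ nubar) (hh0 : 0 < hlow) (hh1 : hlow ≤ hbar)
    (ν h : ℝ → ℝ) (hνc : Continuous ν) (hhc : Continuous h)
    (hνb : ∀ z ∈ Set.Icc (0 : ℝ) 1, nulow ≤ ν z ∧ ν z ≤ nubar)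
    (hνint : (∫ z in (0 : ℝ)..1, ν z) = 1)
    (hhb : ∀ x ∈ Set.Icc (0 : ℝ) (Δ / mulow), hlow ≤ h x ∧ h x ≤ hbar)
    (hhint : (∫ x in (0 : ℝ)..(Δ / mulow), h x) = 1)
    (V : ℝ → ℝ) (hV : ∀ y, V y = ∫ z in (0 : ℝ)..y, ν z)
    (Z : ℝ → ℝ) (hZ : ∀ μ, Z μ = ∫ x in (0 : ℝ)..(Δ / μ), x * (1 - V (μ * x / Δ)) * h x) :
    ∀ μ ∈ Set.Ioo mulow mubar,
      HasDerivAt Z (-(∫ x in (0 : ℝ)..(Δ / μ), x ^ 2 / Δ * ν (μ * x / Δ) * h x)) μ ∧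
      -(Δ * nubar / mulow ^ 2)
        ≤ -(∫ x in (0 : ℝ)..(Δ / μ), x ^ 2 / Δ * ν (μ * x / Δ) * h x) ∧
      -(∫ x in (0 : ℝ)..(Δ / μ), x ^ 2 / Δ * ν (μ * x / Δ) * h x)
        ≤ -(nulow * hlow * Δ ^ 3 / (3 * mubar ^ 3)) := by
  rintro μ ⟨hμ1, hμ2⟩
  have hμ : 0 < μ := hmulow.trans hμ1
  have hVd : ∀ y, HasDerivAt V (ν y) y := by
    intro y
    rw [show V = fun y => ∫ z in (0 : ℝ)..y, ν z from funext hV]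
    exact intervalIntegral.integral_hasDerivAt_right (hνc.intervalIntegrable _ _)
      (hνc.stronglyMeasurableAtFilter _ _) hνc.continuousAt
  have hVc : Continuous V := continuous_iff_continuousAt.2 fun y => (hVd y).continuousAt
  have hG : Continuous fun x => x ^ 2 / Δ * ν (μ * x / Δ) * h x := by fun_prop
  have hle : Δ / μ ≤ Δ / mulow := by gcongr
  have hb0 : 0 ≤ Δ / μ := by positivity
  have hz : ∀ x ∈ Set.Icc 0 (Δ / μ), μ * x / Δ ∈ Set.Icc (0 : ℝ) 1 := by
    rintro x ⟨hx0, hx1⟩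
    refine ⟨by positivity, ?_⟩
    rw [le_div_iff₀ hμ] at hx1
    rw [div_le_one hΔ0]
    linarith
  refine ⟨?_, ?_, ?_⟩
  · have hb : HasDerivAt (fun s : ℝ => Δ / s) (-Δ / μ ^ 2) μ := by
      simpa [div_eq_mul_inv] using (hasDerivAt_inv hμ.ne').const_mul Δ
    have key := hasDerivAt_integral_moving_endpoint (m := μ)
      (f := fun s x => x * (1 - V (s * x / Δ)) * h x)
      (f' := fun s x => -(x ^ 2 / Δ * ν (s * x / Δ) * h x)) (b := fun s => Δ / s)
      (by simp only [Function.uncurry_def]; fun_prop)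
      (by simp only [Function.uncurry_def]; fun_prop) ?_ hb
    · rw [show Z = fun s => ∫ x in (0 : ℝ)..(Δ / s), x * (1 - V (s * x / Δ)) * h x from funext hZ]
      have h1 : μ * (Δ / μ) / Δ = 1 := by field_simp
      -- The competing bid at the moving endpoint is beaten with probability `1 - V 1 = 0`.
      have hV1 : V 1 = 1 := by rw [hV, hνint]
      simpa [h1, hV1] using key
    · intro s x
      have hin : HasDerivAt (fun r : ℝ => r * x / Δ) (x / Δ) s := by
        simpa using ((hasDerivAt_id s).mul_const x).div_const Δ
      have := ((((hVd (s * x / Δ)).comp s hin).const_sub 1).const_mul x).mul_const (h x)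
      refine HasDerivAt.congr_deriv (f := fun r => x * (1 - V (r * x / Δ)) * h x) this ?_
      ring
  · rw [neg_le_neg_iff]
    have hmass : ∫ x in (0 : ℝ)..(Δ / μ), h x ≤ 1 := by
      rw [← hhint]
      refine intervalIntegral.integral_mono_interval le_rfl hb0 hle ?_
        (hhc.intervalIntegrable _ _)
      filter_upwards [ae_restrict_mem measurableSet_Ioc] with x hx
      exact hh0.le.trans (hhb x ⟨hx.1.le, hx.2⟩).1
    have hc : 0 ≤ Δ * nubar / mulow ^ 2 := by
      have := hnu0.trans_le hnu1
      positivity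
    calc ∫ x in (0 : ℝ)..(Δ / μ), x ^ 2 / Δ * ν (μ * x / Δ) * h x
        ≤ ∫ x in (0 : ℝ)..(Δ / μ), Δ * nubar / mulow ^ 2 * h x := by
          refine intervalIntegral.integral_mono_on hb0 (hG.intervalIntegrable _ _)
            ((hhc.const_mul _).intervalIntegrable _ _) fun x hx => ?_
          have hxl := hx.2.trans hle
          have hν := hνb _ (hz x hx)
          have hx2 : x ^ 2 / Δ ≤ Δ / mulow ^ 2 := by
            calc x ^ 2 / Δ ≤ (Δ / mulow) ^ 2 / Δ := by
                  have := hx.1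
                  gcongr
              _ = Δ / mulow ^ 2 := by field_simp
          refine mul_le_mul_of_nonneg_right ?_ (hh0.le.trans (hhb x ⟨hx.1, hxl⟩).1)
          calc x ^ 2 / Δ * ν (μ * x / Δ) ≤ Δ / mulow ^ 2 * nubar :=
                mul_le_mul hx2 hν.2 (hnu0.le.trans hν.1) (by positivity)
            _ = Δ * nubar / mulow ^ 2 := by ring
      _ = Δ * nubar / mulow ^ 2 * ∫ x in (0 : ℝ)..(Δ / μ), h x :=
          intervalIntegral.integral_const_mul _ _
      _ ≤ Δ * nubar / mulow ^ 2 := mul_le_of_le_one_right hc hmass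
  · rw [neg_le_neg_iff]
    calc nulow * hlow * Δ ^ 3 / (3 * mubar ^ 3)
        ≤ nulow * hlow * Δ ^ 2 / (3 * μ ^ 3) := by
          have hpow : Δ ^ 3 ≤ Δ ^ 2 := pow_le_pow_of_le_one hΔ0.le hΔ1 (by norm_num)
          gcongr
      _ = ∫ x in (0 : ℝ)..(Δ / μ), nulow * hlow / Δ * x ^ 2 := by
          rw [intervalIntegral.integral_const_mul, integral_pow, div_pow]
          norm_num
          field_simp
      _ ≤ _ := by
          refine intervalIntegral.integral_mono_on hb0
            (Continuous.intervalIntegrable (by fun_prop) _ _) (hG.intervalIntegrable _ _)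
            fun x hx => ?_
          have hν := hνb _ (hz x hx)
          have hhx := hhb x ⟨hx.1, hx.2.trans hle⟩
          calc nulow * hlow / Δ * x ^ 2 = x ^ 2 / Δ * (nulow * hlow) := by ring
            _ ≤ x ^ 2 / Δ * (ν (μ * x / Δ) * h x) :=
                mul_le_mul_of_nonneg_left
                  (mul_le_mul hν.1 hhx.1 hh0.le (hnu0.le.trans hν.1)) (by positivity)
            _ = x ^ 2 / Δ * ν (μ * x / Δ) * h x := by ring
end
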